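/- Let P be a three-valued mem-basic form over A all of whose leaves are U. Then (i) α̃(P) = α(P), and (ii) for every repetition-free word σ over A, CP_cl^U ⊢ P = F_σ(U, …, U) and CP_cl^U ⊢ P = U (where F_σ(U, …, U) has 2^{|σ|} arguments, all equal to U). -/

import Mathlib

/-!
Since `U` absorbs every conditional it controls, instantiating (CL2) with `U` as the inner
condition gives `U ◁ u ▷ U = U` for every `u` (`DerClU.cond_U`). Hence every tree with only `U`
leaves, and in particular every `F_σ(U, …, U)`, is derivably equal to `U`. For the shared alphabet,
the auxiliary function `f(P, ·)` is the identity on every set containing `α(P)`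
(`shaAux_eq_of_subset`): the node `a` removes `a` from the argument and then puts it back.
-/


/-- Three-valued conditional expressions over a set `A` of atoms: constants T, F, U,
atoms, and the ternary conditional `cond P Q R` read `P ◁ Q ▷ R` ("if Q then P else R"). -/
inductive ExprU (A : Type) : Type
  | T : ExprU A
  | F : ExprU A
  | U : ExprU A
  | atom : A → ExprU A
  | cond : ExprU A → ExprU A → ExprU A → ExprU A

namespace ExprU

/-- Derivability from the axiom system CP_cl^U = CP + (CPmem) + (CL2) + (CP-U). -/
inductive DerClU {A : Type} : ExprU A → ExprU A → Prop
  | refl (P : ExprU A) : DerClU P P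
  | symm {P Q : ExprU A} : DerClU P Q → DerClU Q P
  | trans {P Q R : ExprU A} : DerClU P Q → DerClU Q R → DerClU P R
  | congr {P P' Q Q' R R' : ExprU A} :
      DerClU P P' → DerClU Q Q' → DerClU R R' →
      DerClU (cond P Q R) (cond P' Q' R')
  | cp1 (x y : ExprU A) : DerClU (cond x T y) x
  | cp2 (x y : ExprU A) : DerClU (cond x F y) y
  | cp3 (x : ExprU A) : DerClU (cond T x F) x
  | cp4 (x y z u v : ExprU A) :
      DerClU (cond x (cond y z u) v) (cond (cond x y v) z (cond x u v))
  | cpmem (x y z u v w : ExprU A) :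
      DerClU (cond x y (cond z u (cond v y w))) (cond x y (cond z u w))
  | cl2 (x y z u v w : ExprU A) :
      DerClU (cond (cond x y z) u (cond v y w)) (cond (cond x u v) y (cond z u w))
  | cpu (x y : ExprU A) : DerClU (cond x U y) U

/-- The set α(P) of atoms occurring in a conditional expression. -/
def atoms {A : Type} [DecidableEq A] : ExprU A → Finset A
  | T => ∅
  | F => ∅
  | U => ∅
  | atom a => {a}
  | cond P Q R => atoms P ∪ atoms Q ∪ atoms R

/-- Three-valued mem-basic forms. -/
inductive IsMBF {A : Type} [DecidableEq A] : ExprU A → Prop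
  | T : IsMBF T
  | F : IsMBF F
  | U : IsMBF U
  | cond {P Q : ExprU A} (a : A) : IsMBF P → IsMBF Q →
      a ∉ atoms P → a ∉ atoms Q → IsMBF (cond P (atom a) Q)

/-- The auxiliary function f for the three-valued shared alphabet:
f(U, x) = x, f(T, x) = f(F, x) = ∅,
f(P₁ ◁ a ▷ P₂, x) = {a} ∪ (f(P₁, x \ {a}) ∩ f(P₂, x \ {a})). -/
def shaAux {A : Type} [DecidableEq A] : ExprU A → Finset A → Finset A
  | cond P (atom a) Q, x => insert a (shaAux P (x.erase a) ∩ shaAux Q (x.erase a))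
  | U, x => x
  | _, _ => ∅

/-- The shared alphabet α̃(P) = f(P, α(P)) of a three-valued mem-basic form. -/
def sha {A : Type} [DecidableEq A] (P : ExprU A) : Finset A :=
  shaAux P (atoms P)

/-- Left a-reduction ℓ_a on basic forms. -/
def lred {A : Type} [DecidableEq A] (a : A) : ExprU A → ExprU A
  | cond P (atom b) Q => if b = a then P else cond (lred a P) (atom b) (lred a Q)
  | e => e

/-- Right a-reduction r_a on basic forms. -/
def rred {A : Type} [DecidableEq A] (a : A) : ExprU A → ExprU A
  | cond P (atom b) Q => if b = a then Q else cond (rred a P) (atom b) (rred a Q)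
  | e => e

/-- `Fseq σ P` is the basic form F_σ(P_0, …, P_{2^{|σ|}−1}):
F_ε(P_0) = P_0 and F_{aρ}(P_0,…) = F_ρ(P_0,…,P_{2^{|ρ|}−1}) ◁ a ▷ F_ρ(P_{2^{|ρ|}},…). -/
def Fseq {A : Type} : (σ : List A) → (Fin (2 ^ σ.length) → ExprU A) → ExprU A
  | [], P => P ⟨0, by positivity⟩
  | a :: ρ, P =>
      cond (Fseq ρ (fun i => P ⟨i.1, by have := i.2; simp [Nat.pow_succ]; omega⟩))
        (atom a)
        (Fseq ρ (fun i => P ⟨2 ^ ρ.length + i.1, by have := i.2; simp [Nat.pow_succ]; omega⟩))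

end ExprU

namespace ExprU
/-- The predicate "all leaves of this basic form are U". -/
inductive AllLeavesU {A : Type} : ExprU A → Prop
  | U : AllLeavesU U
  | cond {P Q : ExprU A} (a : A) :
      AllLeavesU P → AllLeavesU Q → AllLeavesU (cond P (atom a) Q)
end ExprU

namespace ExprU

/-- `U ◁ u ▷ U = U` for an arbitrary condition `u`. -/
theorem DerClU.cond_U {A : Type} (u : ExprU A) : DerClU (cond U u U) U :=
  -- Write both branches as `T ◁ U ▷ T` and exchange the conditions `u` and `U` by (CL2).
  .trans (.congr (.symm (.cpu T T)) (.refl u) (.symm (.cpu T T)))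
    (.trans (.cl2 T U T u T T) (.cpu _ _))

theorem AllLeavesU.derClU_U {A : Type} {P : ExprU A} (h : AllLeavesU P) : DerClU P ExprU.U := by
  induction h with
  | U => exact .refl _
  | cond a _ _ ihP ihQ => exact .trans (.congr ihP (.refl _) ihQ) (.cond_U _)

theorem allLeavesU_Fseq {A : Type} (σ : List A) : AllLeavesU (Fseq σ (fun _ => U)) := by
  induction σ with
  | nil => exact .U
  | cons a ρ ih => exact .cond a ih ih

/-- Absence of `a` below each node labelled `a` keeps the inclusion `α(P) ⊆ x` true when passing
to a branch with argument `x \ {a}`. -/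
theorem shaAux_eq_of_subset {A : Type} [DecidableEq A] {P : ExprU A} (hU : AllLeavesU P)
    (hm : IsMBF P) (x : Finset A) (hx : atoms P ⊆ x) : shaAux P x = x := by
  induction hU generalizing x with
  | U => rfl
  | @cond P Q a _ _ ihP ihQ =>
    cases hm with
    | cond _ hP hQ haP haQ =>
      simp only [atoms, Finset.union_subset_iff, Finset.singleton_subset_iff] at hx
      obtain ⟨⟨hPx, hax⟩, hQx⟩ := hx
      rw [shaAux, ihP hP _ (Finset.subset_erase.2 ⟨hPx, haP⟩),
        ihQ hQ _ (Finset.subset_erase.2 ⟨hQx, haQ⟩), Finset.inter_self, Finset.insert_erase hax]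

end ExprU

open ExprU in
/-- If P is a three-valued mem-basic form all of whose leaves are U, then
(i) α̃(P) = α(P), and (ii) for every repetition-free word σ over A,
CP_cl^U ⊢ P = F_σ(U, …, U) and CP_cl^U ⊢ P = U. -/
theorem stmt_6 {A : Type} [DecidableEq A] (P : ExprU A)
    (hm : IsMBF P) (hU : AllLeavesU P) :
    sha P = atoms P ∧
      ∀ σ : List A, σ.Nodup →
        DerClU P (Fseq σ (fun _ => ExprU.U)) ∧ DerClU P ExprU.U := by
  exact ⟨shaAux_eq_of_subset hU hm _ Finset.Subset.rfl, fun σ _ =>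
    ⟨.trans hU.derClU_U (.symm (allLeavesU_Fseq σ).derClU_U), hU.derClU_U⟩⟩
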